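/- Theorem 3.4 (optimality via the policy matrix): let S and A be nonempty finite types, P : A → Matrix S S ℝ with each P a row-stochastic, R : S → ℝ, and γ ∈ ℝ with 0 < γ < 1. Let π : S → A be a deterministic policy with policy matrix Π(s,a) = 1 if π(s) = a and 0 otherwise, and define the matrix Q : Matrix S S ℝ by Q(s,j) = Σ_{a ∈ A} Π(s,a) · (P a)(s,j). Then π is optimal (its value vector dominates that of every deterministic policy componentwise) if and only if for every action a ∈ A, every component of the vector (Q − P a) *ᵥ ((I − γ·Q)⁻¹ *ᵥ R) is nonnegative. -/

import Mathlib

open Matrix BigOperators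

/-- A matrix is row-stochastic if all entries are nonnegative and every row sums to 1. -/
def RowStochastic {S : Type*} [Fintype S] (P : Matrix S S ℝ) : Prop :=
  (∀ i j, 0 ≤ P i j) ∧ (∀ i, ∑ j, P i j = 1)

/-- The transition matrix `P^π` of a deterministic policy `π`:
`P^π(s, j) = (P (π s))(s, j)`. -/
def polMat {S A : Type*} (P : A → Matrix S S ℝ) (π : S → A) : Matrix S S ℝ :=
  Matrix.of fun s j => P (π s) s j

/-- The value vector `V^π = (I - γ • P^π)⁻¹ *ᵥ R` of a deterministic policy `π`. -/
noncomputable def polVal {S A : Type*} [Fintype S] [DecidableEq S]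
    (P : A → Matrix S S ℝ) (γ : ℝ) (R : S → ℝ) (π : S → A) : S → ℝ :=
  (1 - γ • polMat P π)⁻¹ *ᵥ R

/-- The policy matrix of a deterministic policy `π : S → A`. -/
noncomputable def policyMatrix {S A : Type*} [DecidableEq A] (π : S → A) : Matrix S A ℝ :=
  Matrix.of fun s a => if π s = a then 1 else 0

/-! If `N` is nonnegative with row sums below `1`, evaluating `x - N *ᵥ x` at a minimum of `x` shows
that `1 - N` reflects the componentwise order, hence is invertible. By the Bellman equation,
`(1 - γ • P^π') *ᵥ V^π = R + γ • (P^π - P^π') *ᵥ V^π`, while `(1 - γ • P^π') *ᵥ V^π' = R`, so the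
sign of the advantage `(P^π - P^π') *ᵥ V^π` decides how `V^π` and `V^π'` compare. Switching `π` at a
single state where an advantage is negative thus gives a policy whose value dominates `V^π` without
being equal to it. -/

/-- Strictly substochastic matrices: nonnegative entries, and every row sum less than `1`.
They abstract a transition matrix multiplied by a discount factor. -/
def StrictlySubstochastic {n K : Type*} [Fintype n] [Semiring K] [PartialOrder K]
    (N : Matrix n n K) : Prop :=
  (∀ i j, 0 ≤ N i j) ∧ ∀ i, ∑ j, N i j < 1

namespace StrictlySubstochastic

variable {n K : Type*} [Fintype n]

theorem nonneg_of_mulVec_le [Ring K] [LinearOrder K] [IsStrictOrderedRing K] {N : Matrix n n K}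
    (hN : StrictlySubstochastic N) {x : n → K} (hx : N *ᵥ x ≤ x) : 0 ≤ x := by
  intro i
  have : Nonempty n := ⟨i⟩
  obtain ⟨m, hm⟩ := Finite.exists_min x
  have hrow : (∑ j, N m j) * x m ≤ x m :=
    calc (∑ j, N m j) * x m = ∑ j, N m j * x m := Finset.sum_mul ..
      _ ≤ ∑ j, N m j * x j :=
        Finset.sum_le_sum fun j _ => mul_le_mul_of_nonneg_left (hm j) (hN.1 m j)
      _ ≤ x m := hx m
  have hmul : 0 ≤ (1 - ∑ j, N m j) * x m := by
    rwa [sub_mul, one_mul, sub_nonneg]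
  exact (nonneg_of_mul_nonneg_right hmul (sub_pos.2 (hN.2 m))).trans (hm i)

theorem le_of_one_sub_mulVec_le [DecidableEq n] [Ring K] [LinearOrder K] [IsStrictOrderedRing K]
    {N : Matrix n n K} (hN : StrictlySubstochastic N) {x y : n → K}
    (h : (1 - N) *ᵥ x ≤ (1 - N) *ᵥ y) : x ≤ y := by
  rw [← sub_nonneg] at h ⊢
  rw [← mulVec_sub, sub_mulVec, one_mulVec, sub_nonneg] at h
  exact hN.nonneg_of_mulVec_le h

theorem isUnit_one_sub [DecidableEq n] [Field K] [LinearOrder K] [IsStrictOrderedRing K]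
    {N : Matrix n n K} (hN : StrictlySubstochastic N) : IsUnit (1 - N) :=
  mulVec_injective_iff_isUnit.1 fun _ _ h =>
    le_antisymm (hN.le_of_one_sub_mulVec_le h.le) (hN.le_of_one_sub_mulVec_le h.ge)

end StrictlySubstochastic

theorem RowStochastic.strictlySubstochastic_smul {S : Type*} [Fintype S] {M : Matrix S S ℝ}
    (hM : RowStochastic M) {γ : ℝ} (hγ0 : 0 ≤ γ) (hγ1 : γ < 1) : StrictlySubstochastic (γ • M) := by
  refine ⟨fun i j => mul_nonneg hγ0 (hM.1 i j), fun i => ?_⟩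
  simpa only [Matrix.smul_apply, smul_eq_mul, ← Finset.mul_sum, hM.2 i, mul_one] using hγ1

theorem sum_policyMatrix_mul {S A : Type*} [Fintype A] [DecidableEq A] (P : A → Matrix S S ℝ)
    (π : S → A) : (Matrix.of fun s j => ∑ a, policyMatrix π s a * P a s j) = polMat P π := by
  ext s j
  simp [policyMatrix, polMat]

section PolicyComparison

variable {S A : Type*} [Fintype S] {P : A → Matrix S S ℝ} {γ : ℝ} {R : S → ℝ} {π π' : S → A}

theorem StrictlySubstochastic.smul_polMat (hP : ∀ a, StrictlySubstochastic (γ • P a)) (π : S → A) :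
    StrictlySubstochastic (γ • polMat P π) :=
  ⟨fun s => (hP (π s)).1 s, fun s => (hP (π s)).2 s⟩

variable [DecidableEq S]

theorem polMat_sub_polMat_update_mulVec (P : A → Matrix S S ℝ) (π : S → A) (s : S) (a : A)
    (v : S → ℝ) :
    (polMat P π - polMat P (Function.update π s a)) *ᵥ v =
      Pi.single s (((polMat P π - P a) *ᵥ v) s) := by
  ext t
  obtain rfl | hts := eq_or_ne t s
  · simp [mulVec, dotProduct, polMat]
  · simp [mulVec, dotProduct, polMat, hts]

theorem bellman_equation (hP : ∀ a, StrictlySubstochastic (γ • P a)) (R : S → ℝ) (π : S → A) :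
    (1 - γ • polMat P π) *ᵥ polVal P γ R π = R := by
  have hdet := (isUnit_iff_isUnit_det _).1 (StrictlySubstochastic.smul_polMat hP π).isUnit_one_sub
  rw [polVal, mulVec_mulVec, mul_nonsing_inv _ hdet, one_mulVec]

theorem one_sub_smul_polMat_mulVec_polVal (hP : ∀ a, StrictlySubstochastic (γ • P a)) (R : S → ℝ)
    (π π' : S → A) :
    (1 - γ • polMat P π') *ᵥ polVal P γ R π =
      R + γ • ((polMat P π - polMat P π') *ᵥ polVal P γ R π) := by
  rw [← sub_eq_iff_eq_add']
  nth_rewrite 2 [← bellman_equation hP R π]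
  rw [← sub_mulVec, sub_sub_sub_cancel_left, ← smul_sub, smul_mulVec]

theorem polVal_le_polVal_of_advantage_nonneg (hP : ∀ a, StrictlySubstochastic (γ • P a))
    (hγ : 0 ≤ γ) (h : 0 ≤ (polMat P π - polMat P π') *ᵥ polVal P γ R π) :
    polVal P γ R π' ≤ polVal P γ R π := by
  apply (StrictlySubstochastic.smul_polMat hP π').le_of_one_sub_mulVec_le
  rw [bellman_equation hP, one_sub_smul_polMat_mulVec_polVal hP]
  exact le_add_of_nonneg_right (smul_nonneg hγ h)

theorem polVal_le_polVal_of_advantage_nonpos (hP : ∀ a, StrictlySubstochastic (γ • P a))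
    (hγ : 0 ≤ γ) (h : (polMat P π - polMat P π') *ᵥ polVal P γ R π ≤ 0) :
    polVal P γ R π ≤ polVal P γ R π' := by
  apply (StrictlySubstochastic.smul_polMat hP π').le_of_one_sub_mulVec_le
  rw [bellman_equation hP, one_sub_smul_polMat_mulVec_polVal hP]
  exact add_le_of_nonpos_right (smul_nonpos_of_nonneg_of_nonpos hγ h)

theorem advantage_eq_zero_of_polVal_eq (hP : ∀ a, StrictlySubstochastic (γ • P a)) (hγ : γ ≠ 0)
    (h : polVal P γ R π = polVal P γ R π') :
    (polMat P π - polMat P π') *ᵥ polVal P γ R π = 0 := by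
  have hadv := one_sub_smul_polMat_mulVec_polVal hP R π π'
  rw [h, bellman_equation hP, left_eq_add, ← h] at hadv
  exact (smul_eq_zero_iff_right hγ).1 hadv

end PolicyComparison

theorem optimal_iff_nonneg_advantage_policyMatrix_general {S A : Type*} [Fintype S] [DecidableEq S]
    (P : A → Matrix S S ℝ) (R : S → ℝ) (γ : ℝ) (hγ : 0 < γ)
    (hP : ∀ a, StrictlySubstochastic (γ • P a)) (π : S → A) :
    (∀ π' : S → A, ∀ s : S, polVal P γ R π' s ≤ polVal P γ R π s) ↔
    (∀ a : A, ∀ s : S, 0 ≤ ((polMat P π - P a) *ᵥ polVal P γ R π) s) := by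
  constructor
  · intro hopt a s
    by_contra! hneg
    have hadv := polMat_sub_polMat_update_mulVec P π s a (polVal P γ R π)
    have himprove : polVal P γ R π ≤ polVal P γ R (Function.update π s a) :=
      polVal_le_polVal_of_advantage_nonpos hP hγ.le (hadv.trans_le (Pi.single_nonpos.2 hneg.le))
    have hzero := advantage_eq_zero_of_polVal_eq hP hγ.ne' (himprove.antisymm (hopt _))
    exact hneg.ne (Pi.single_eq_zero_iff.1 (hadv.symm.trans hzero))
  · intro hadv π'
    exact polVal_le_polVal_of_advantage_nonneg hP hγ.le fun s => hadv (π' s) s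

/-- Theorem 3.4: optimality via the policy matrix. -/
theorem optimal_iff_nonneg_advantage_policyMatrix {S A : Type*} [Fintype S] [DecidableEq S]
    [Nonempty S] [Fintype A] [DecidableEq A] [Nonempty A]
    (P : A → Matrix S S ℝ) (hP : ∀ a, RowStochastic (P a))
    (R : S → ℝ) (γ : ℝ) (hγ0 : 0 < γ) (hγ1 : γ < 1) (π : S → A)
    (Q : Matrix S S ℝ) (hQ : Q = Matrix.of fun s j => ∑ a, policyMatrix π s a * P a s j) :
    (∀ π' : S → A, ∀ s : S, polVal P γ R π' s ≤ polVal P γ R π s) ↔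
    (∀ a : A, ∀ s : S, 0 ≤ ((Q - P a) *ᵥ ((1 - γ • Q)⁻¹ *ᵥ R)) s) := by
  subst hQ
  rw [sum_policyMatrix_mul]
  exact optimal_iff_nonneg_advantage_policyMatrix_general P R γ hγ0
    (fun a => (hP a).strictlySubstochastic_smul hγ0.le hγ1) π
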